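/- Let d ≥ 2 be an integer, let μ be the normalized Haar probability measure on U(d), and let Γ(X) = Σ_{i=1}^r K_i X K_iᴴ be a Kraus channel on d×d matrices (so Σ_i K_iᴴ K_i = I). Set q = (Σ_{i=1}^r |tr(K_i)|² − 1)/(d² − 1). Then for every density matrix ρ on ℂ^d, ∫_{U(d)} tr( ρ · Uᴴ Γ(U ρ Uᴴ) U ) dμ(U) = q·tr(ρ²) + (1 − q)/d. (Exact Haar-average of the unnormalized recovery fidelity F′ in the PQAS authentication theorem.) -/

import Mathlib

open MeasureTheory Matrix
open scoped ComplexOrder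

attribute [local instance] Matrix.normedAddCommGroup Matrix.normedSpace

noncomputable instance {n : Type*} [Fintype n] [DecidableEq n] :
    MeasurableSpace (Matrix.unitaryGroup n ℂ) := borel _

instance {n : Type*} [Fintype n] [DecidableEq n] :
    BorelSpace (Matrix.unitaryGroup n ℂ) := ⟨rfl⟩

/-!
For fixed matrices `A` and `B`, the map `T : X ↦ ∫ tr (U A Uᴴ X) • U B Uᴴ dμ(U)` commutes with
every unitary conjugation, by translation invariance of `μ`. If `e` is an orthogonal projection, the
difference of the conjugations by `1 + (± I - 1) • e` is `2 I` times the commutator with `e`; since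
orthogonal projections span all matrices, `T` commutes with every inner derivation. Applying this to
matrix units forces `T X = c X + b (tr X) 1`, and `c`, `b` are determined by `tr (T 1) = tr A tr B`
and by the trace of the endomorphism `T`, which is `tr (A B)`. Finally, for linear `Φ` the integral
of `tr (U A Uᴴ Φ (U B Uᴴ))` is the trace of the endomorphism `Φ ∘ T`, that is
`c Tr Φ + b tr (Φ 1)`; a channel with Kraus operators `K i` has `Tr Φ = ∑ |tr (K i)|²` and
`tr (Φ 1) = tr 1`.
-/

open Unitary (conjStarAlgAut conjStarAlgAut_apply)

/-- A linear endomorphism of a complex star algebra is unitarily covariant if it commutes with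
conjugation by every unitary element. -/
def IsUnitarilyCovariant {A : Type*} [Ring A] [StarRing A] [Algebra ℂ A] (T : A →ₗ[ℂ] A) : Prop :=
  ∀ (U : unitary A) (X : A), T (conjStarAlgAut ℂ A U X) = conjStarAlgAut ℂ A U (T X)

section StarAlgebra

variable {A : Type*} [Ring A] [StarRing A] {e : A}

lemma one_add_smul_mem_unitary {R : Type*} [CommRing R] [StarRing R] [Algebra R A]
    [StarModule R A] (he : IsStarProjection e) {z : R} (hz : z ∈ unitary R) :
    1 + (z - 1) • e ∈ unitary A := by
  have hsq : e * e = e := he.isIdempotentElem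
  have hmul (u v : R) : (1 + u • e) * (1 + v • e) = 1 + (u + v + u * v) • e := by
    simp only [mul_add, add_mul, mul_one, one_mul, smul_mul_smul_comm, hsq]
    module
  have hstar : star (1 + (z - 1) • e) = 1 + (star z - 1) • e := by
    simp [star_smul, he.isSelfAdjoint.star_eq]
  have hz' : (z - 1) + (star z - 1) + (z - 1) * (star z - 1) = 0 := by
    linear_combination Unitary.mul_star_self_of_mem hz
  rw [Unitary.mem_iff, hstar, hmul, hmul, mul_comm (star z - 1), add_comm (star z - 1), hz']
  simp

variable [Algebra ℂ A] [StarModule ℂ A]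

lemma one_add_smul_conj_I_sub_neg_I (he : IsSelfAdjoint e) (X : A) :
    (1 + (Complex.I - 1) • e) * X * star (1 + (Complex.I - 1) • e) -
      (1 + (-Complex.I - 1) • e) * X * star (1 + (-Complex.I - 1) • e) =
      (2 * Complex.I) • (e * X - X * e) := by
  simp only [star_add, star_one, star_smul, star_sub, star_neg, he.star_eq,
    RCLike.star_def, Complex.conj_I, add_mul, mul_add, one_mul, mul_one, smul_mul_assoc,
    mul_smul_comm]
  module

lemma IsUnitarilyCovariant.map_commutator_of_isStarProjection {T : A →ₗ[ℂ] A}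
    (hT : IsUnitarilyCovariant T) (he : IsStarProjection e) (X : A) :
    T (e * X - X * e) = e * T X - T X * e := by
  have conj_I := hT ⟨_, one_add_smul_mem_unitary he (z := Complex.I) (by simp [Unitary.mem_iff])⟩ X
  have conj_neg_I :=
    hT ⟨_, one_add_smul_mem_unitary he (z := -Complex.I) (by simp [Unitary.mem_iff])⟩ X
  simp only [conjStarAlgAut_apply] at conj_I conj_neg_I
  refine smul_right_injective A (show 2 * Complex.I ≠ 0 by simp) ?_
  simp only [← map_smul, ← one_add_smul_conj_I_sub_neg_I he.isSelfAdjoint]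
  rw [map_sub, conj_I, conj_neg_I, one_add_smul_conj_I_sub_neg_I he.isSelfAdjoint]

end StarAlgebra

section MatrixEndomorphism

variable {n : Type*} [Fintype n] [DecidableEq n]

omit [DecidableEq n] in
lemma span_isStarProjection_eq_top :
    Submodule.span ℂ {e : Matrix n n ℂ | IsStarProjection e} = ⊤ := by
  classical
  have isStarProjection_single (i : n) : IsStarProjection (single i i (1 : ℂ)) :=
    ⟨by simp [IsIdempotentElem], by simp [isSelfAdjoint_iff, star_eq_conjTranspose]⟩
  have mem_span_of_isHermitian {H : Matrix n n ℂ} (hH : H.IsHermitian) :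
      H ∈ Submodule.span ℂ {e : Matrix n n ℂ | IsStarProjection e} := by
    rw [hH.spectral_theorem, ← sum_single_eq_diagonal, map_sum]
    refine Submodule.sum_mem _ fun i _ => ?_
    rw [← mul_one (Function.comp _ _ i), ← smul_eq_mul, ← smul_single, map_smul]
    exact Submodule.smul_mem _ _ (Submodule.subset_span ((isStarProjection_single i).map _))
  refine eq_top_iff.mpr fun X _ => ?_
  rw [← realPart_add_I_smul_imaginaryPart X]
  exact add_mem (mem_span_of_isHermitian (realPart X).2)
    (Submodule.smul_mem _ _ (mem_span_of_isHermitian (imaginaryPart X).2))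

lemma IsUnitarilyCovariant.map_commutator {T : Matrix n n ℂ →ₗ[ℂ] Matrix n n ℂ}
    (hT : IsUnitarilyCovariant T) (A X : Matrix n n ℂ) :
    T (A * X - X * A) = A * T X - T X * A := by
  have hA : A ∈ Submodule.span ℂ {e : Matrix n n ℂ | IsStarProjection e} := by
    rw [span_isStarProjection_eq_top]; trivial
  induction hA using Submodule.span_induction with
  | mem e he => exact hT.map_commutator_of_isStarProjection he X
  | zero => simp
  | add A B _ _ hA hB =>
    have commutator_add (Y : Matrix n n ℂ) :
        (A + B) * Y - Y * (A + B) = (A * Y - Y * A) + (B * Y - Y * B) := by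
      noncomm_ring
    rw [commutator_add, commutator_add, map_add, hA, hB]
  | smul c A _ hA => simp only [smul_mul_assoc, mul_smul_comm, ← smul_sub, map_smul, hA]

variable {R : Type*} [CommRing R]

lemma linearMap_trace_eq_sum (Φ : Matrix n n R →ₗ[R] Matrix n n R) :
    LinearMap.trace R _ Φ = ∑ i, ∑ j, Φ (single i j 1) i j := by
  rw [LinearMap.trace_eq_matrix_trace R (Matrix.stdBasis R n n), Matrix.trace,
    Fintype.sum_prod_type]
  simp only [LinearMap.toMatrix_apply, diag_apply, Matrix.stdBasis_eq_single]
  rfl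

lemma linearMap_trace_mulLeftRight (A B : Matrix n n R) :
    LinearMap.trace R _ (LinearMap.mulLeftRight R (A, B)) = A.trace * B.trace := by
  simp [linearMap_trace_eq_sum, trace, Finset.sum_mul_sum, mul_apply, single_apply, ite_and]

lemma linearMap_trace_comp_of_eq_smul_add_trace_smul_one (Φ : Matrix n n R →ₗ[R] Matrix n n R)
    {T : Matrix n n R →ₗ[R] Matrix n n R} {c b : R}
    (hT : ∀ X, T X = c • X + (b * X.trace) • 1) :
    LinearMap.trace R _ (Φ ∘ₗ T) = c * LinearMap.trace R _ Φ + b * (Φ 1).trace := by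
  have comp_eq : Φ ∘ₗ T = c • Φ + b • (traceLinearMap n R R).smulRight (Φ 1) :=
    LinearMap.ext fun X => by simp [hT, mul_smul]
  rw [comp_eq, map_add, map_smul, map_smul, LinearMap.trace_smulRight, traceLinearMap_apply,
    smul_eq_mul, smul_eq_mul]

variable [Nontrivial n] {T : Matrix n n R →ₗ[R] Matrix n n R}

omit [DecidableEq n] in
lemma exists_eq_mul_add_trace_smul_of_map_commutator
    (hT : ∀ A X, T (A * X - X * A) = A * T X - T X * A) :
    ∃ W Z : Matrix n n R, ∀ X, T X = X * W + X.trace • Z := by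
  classical
  -- As `k j ≠ j`, column `j` of `T X * single p (k j) 1` vanishes, so `hT` gives column `j` of
  -- `T (single p (k j) 1 * X - X * single p (k j) 1)` in terms of row `k j` of `T X`.
  choose k hk using fun j : n => exists_ne j
  let W : Matrix n n R := of fun l j => T (single (k j) l 1) (k j) j
  let Z : Matrix n n R := of fun i j => T (single (k j) (k j) 1) i j
  have map_single (p l : n) :
      T (single p l 1) = single p l 1 * W + (single p l (1 : R)).trace • Z := by
    ext i j
    have commutator_eq :
        single p (k j) (1 : R) * single (k j) l 1 - single (k j) l 1 * single p (k j) 1 =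
          single p l 1 - (single p l (1 : R)).trace • single (k j) (k j) (1 : R) := by
      obtain rfl | hlp := eq_or_ne l p
      · simp
      · simp [hlp, hlp.symm]
    have h := congr($(hT (single p (k j) 1) (single (k j) l 1)) i j)
    rw [commutator_eq, map_sub, map_smul] at h
    obtain rfl | hip := eq_or_ne i p
    · simpa [W, Z, (hk j).symm, sub_eq_iff_eq_add] using h
    · simpa [W, Z, (hk j).symm, sub_eq_iff_eq_add, hip] using h
  suffices T = LinearMap.mulRight R W + (traceLinearMap n R R).smulRight Z from
    ⟨W, Z, fun X => congr($this X)⟩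
  refine ext_linearMap R fun p l => LinearMap.ext_ring ?_
  simpa using! map_single p l

theorem exists_eq_smul_add_trace_smul_one_of_map_commutator
    (hT : ∀ A X, T (A * X - X * A) = A * T X - T X * A) :
    ∃ c b : R, ∀ X, T X = c • X + (b * X.trace) • 1 := by
  obtain ⟨W, Z, hWZ⟩ := exists_eq_mul_add_trace_smul_of_map_commutator hT
  have mul_commutator_add_eq_zero (A X : Matrix n n R) :
      X * (A * W - W * A) + X.trace • (A * Z - Z * A) = 0 := by
    have h := hT A X
    rw [hWZ, hWZ, trace_sub, trace_mul_comm, sub_self, zero_smul, add_zero] at h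
    simp only [mul_add, add_mul, mul_smul_comm, smul_mul_assoc] at h
    rw [smul_sub]
    linear_combination (norm := noncomm_ring) -h
  have commute_W (A : Matrix n n R) : Commute A W := by
    refine sub_eq_zero.mp (Matrix.ext fun i j => ?_)
    obtain ⟨k, hk⟩ := exists_ne i
    simpa [hk] using congr($(mul_commutator_add_eq_zero A (single k i 1)) k j)
  have commute_Z (A : Matrix n n R) : Commute A Z := by
    obtain ⟨i, -⟩ := exists_pair_ne n
    rw [commute_iff_eq, ← sub_eq_zero]
    simpa [(commute_W A).eq] using mul_commutator_add_eq_zero A (single i i 1)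
  obtain ⟨c, rfl⟩ := mem_range_scalar_of_commute_single fun i j _ => commute_W (single i j 1)
  obtain ⟨b, rfl⟩ := mem_range_scalar_of_commute_single fun i j _ => commute_Z (single i j 1)
  refine ⟨c, b, fun X => ?_⟩
  rw [hWZ, scalar_apply, scalar_apply, ← smul_one_eq_diagonal, ← smul_one_eq_diagonal, smul_smul,
    mul_smul_comm, mul_one, mul_comm b]

theorem IsUnitarilyCovariant.exists_eq_smul_add_trace_smul_one
    {T : Matrix n n ℂ →ₗ[ℂ] Matrix n n ℂ} (hT : IsUnitarilyCovariant T) :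
    ∃ c b : ℂ, ∀ X, T X = c • X + (b * X.trace) • 1 :=
  exists_eq_smul_add_trace_smul_one_of_map_commutator hT.map_commutator

end MatrixEndomorphism

lemma natCast_sq_sub_one_ne_zero {R : Type*} [Ring R] [CharZero R] {d : ℕ} (hd : 1 < d) :
    (d : R) ^ 2 - 1 ≠ 0 :=
  sub_ne_zero.mpr (mod_cast (Nat.one_lt_pow two_ne_zero hd).ne')

section SecondMoment

variable {n : Type*} [Fintype n] [DecidableEq n]

instance {𝕜 : Type*} [RCLike 𝕜] : CompactSpace (unitaryGroup n 𝕜) := by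
  have isCompact_box : IsCompact (X := Matrix n n 𝕜)
      (Set.univ.pi fun _ => Set.univ.pi fun _ => Metric.closedBall 0 1) :=
    isCompact_univ_pi fun _ => isCompact_univ_pi fun _ => isCompact_closedBall _ _
  refine isCompact_iff_compactSpace.mp (isCompact_box.of_isClosed_subset
    (isClosed_unitary (R := Matrix n n 𝕜)) fun U hU i _ j _ => ?_)
  simpa using entry_norm_bound_of_unitary hU i j

lemma trace_conjStarAlgAut {R : Type*} [CommRing R] [StarRing R] (U : unitaryGroup n R)
    (X : Matrix n n R) : (conjStarAlgAut R _ U X).trace = X.trace := by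
  rw [conjStarAlgAut_apply, trace_mul_cycle, Unitary.coe_star_mul_self, one_mul]

lemma continuous_map_conj (φ : Matrix n n ℂ →ₗ[ℂ] ℂ) (A : Matrix n n ℂ) :
    Continuous fun U : unitaryGroup n ℂ => φ (conjStarAlgAut ℂ _ U A) := by
  simp only [conjStarAlgAut_apply]
  refine φ.continuous_of_finiteDimensional.comp ?_
  fun_prop

section FiniteMeasure

variable (μ : Measure (unitaryGroup n ℂ)) [IsFiniteMeasure μ]

lemma integrable_trace_conj_mul_mul_map_conj (A B X : Matrix n n ℂ) (φ : Matrix n n ℂ →ₗ[ℂ] ℂ) :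
    Integrable (fun U => (conjStarAlgAut ℂ _ U A * X).trace * φ (conjStarAlgAut ℂ _ U B)) μ :=
  ((continuous_map_conj (traceLinearMap n ℂ ℂ ∘ₗ LinearMap.mulRight ℂ X) A).mul
    (continuous_map_conj φ B)).integrable_of_hasCompactSupport (HasCompactSupport.of_compactSpace _)

/-- The second moment of `μ` contracted with `A` and `B`: the linear endomorphism
`X ↦ ∫ U, tr (U A Uᴴ X) • U B Uᴴ ∂μ`, with the matrix-valued integral taken entrywise. -/
noncomputable def secondMoment (A B : Matrix n n ℂ) : Matrix n n ℂ →ₗ[ℂ] Matrix n n ℂ where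
  toFun X := of fun i j =>
    ∫ U, (conjStarAlgAut ℂ _ U A * X).trace * conjStarAlgAut ℂ _ U B i j ∂μ
  map_add' X Y := by
    ext i j
    simp only [of_apply, Matrix.add_apply, mul_add, trace_add, add_mul]
    exact integral_add
      (integrable_trace_conj_mul_mul_map_conj μ A B X (entryLinearMap ℂ ℂ i j))
      (integrable_trace_conj_mul_mul_map_conj μ A B Y (entryLinearMap ℂ ℂ i j))
  map_smul' c X := by
    ext i j
    simp [mul_assoc, integral_const_mul]

lemma map_secondMoment (φ : Matrix n n ℂ →ₗ[ℂ] ℂ) (A B X : Matrix n n ℂ) :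
    φ (secondMoment μ A B X) =
      ∫ U, (conjStarAlgAut ℂ _ U A * X).trace * φ (conjStarAlgAut ℂ _ U B) ∂μ := by
  have apply_eq_sum (Y : Matrix n n ℂ) : φ Y = ∑ i, ∑ j, Y i j * φ (single i j 1) := by
    conv_lhs => rw [matrix_eq_sum_single Y]
    simp only [map_sum, ← smul_eq_mul, ← map_smul, smul_single]
    simp only [smul_eq_mul, mul_one]
  have integrable (i j : n) : Integrable (fun U => (conjStarAlgAut ℂ _ U A * X).trace *
      (conjStarAlgAut ℂ _ U B i j * φ (single i j 1))) μ :=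
    integrable_trace_conj_mul_mul_map_conj μ A B X
      (LinearMap.mulRight ℂ (φ (single i j 1)) ∘ₗ entryLinearMap ℂ ℂ i j)
  rw [apply_eq_sum]
  simp only [apply_eq_sum (conjStarAlgAut ℂ _ _ B), Finset.mul_sum]
  rw [integral_finsetSum _ fun i _ => integrable_finsetSum _ fun j _ => integrable i j]
  refine Finset.sum_congr rfl fun i _ => ?_
  rw [integral_finsetSum _ fun j _ => integrable i j]
  simp only [← mul_assoc, integral_mul_const]
  rfl

lemma linearMap_trace_comp_secondMoment (Φ : Matrix n n ℂ →ₗ[ℂ] Matrix n n ℂ)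
    (A B : Matrix n n ℂ) :
    LinearMap.trace ℂ _ (Φ ∘ₗ secondMoment μ A B) =
      ∫ U, (conjStarAlgAut ℂ _ U A * Φ (conjStarAlgAut ℂ _ U B)).trace ∂μ := by
  have integrable (i j : n) : Integrable (fun U => (conjStarAlgAut ℂ _ U A * single i j 1).trace *
      Φ (conjStarAlgAut ℂ _ U B) i j) μ :=
    integrable_trace_conj_mul_mul_map_conj μ A B (single i j 1) (entryLinearMap ℂ ℂ i j ∘ₗ Φ)
  have apply_eq_integral (i j : n) : Φ (secondMoment μ A B (single i j 1)) i j =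
      ∫ U, (conjStarAlgAut ℂ _ U A * single i j 1).trace * Φ (conjStarAlgAut ℂ _ U B) i j ∂μ :=
    map_secondMoment μ (entryLinearMap ℂ ℂ i j ∘ₗ Φ) A B (single i j 1)
  simp only [linearMap_trace_eq_sum, LinearMap.comp_apply, apply_eq_integral]
  simp_rw [← integral_finsetSum _ fun j _ => integrable _ j]
  rw [← integral_finsetSum _ fun i _ => integrable_finsetSum _ fun j _ => integrable i j]
  congr! 2 with U
  simp only [trace_mul_single, MulOpposite.op_one, one_smul]
  rw [Finset.sum_comm]
  simp only [trace, diag_apply, mul_apply]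

theorem isUnitarilyCovariant_secondMoment [μ.IsMulLeftInvariant] (A B : Matrix n n ℂ) :
    IsUnitarilyCovariant (secondMoment μ A B) := by
  intro V X
  ext i j
  have apply_conj : conjStarAlgAut ℂ _ V (secondMoment μ A B X) i j =
      ∫ U, (conjStarAlgAut ℂ _ U A * X).trace *
        conjStarAlgAut ℂ _ V (conjStarAlgAut ℂ _ U B) i j ∂μ :=
    map_secondMoment μ
      (entryLinearMap ℂ ℂ i j ∘ₗ (conjStarAlgAut ℂ _ V).toAlgEquiv.toLinearMap) A B X
  calc secondMoment μ A B (conjStarAlgAut ℂ _ V X) i j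
      = ∫ U, (conjStarAlgAut ℂ _ (V * U) A * conjStarAlgAut ℂ _ V X).trace *
          conjStarAlgAut ℂ _ (V * U) B i j ∂μ := (integral_mul_left_eq_self _ V).symm
    _ = conjStarAlgAut ℂ _ V (secondMoment μ A B X) i j := by
      simp only [apply_conj, Unitary.conjStarAlgAut_mul_apply, ← map_mul, trace_conjStarAlgAut]

end FiniteMeasure

section ProbabilityMeasure

variable (μ : Measure (unitaryGroup n ℂ)) [IsProbabilityMeasure μ]

lemma trace_secondMoment_one (A B : Matrix n n ℂ) :
    (secondMoment μ A B 1).trace = A.trace * B.trace := by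
  have h := map_secondMoment μ (traceLinearMap n ℂ ℂ) A B 1
  simpa only [traceLinearMap_apply, mul_one, trace_conjStarAlgAut, integral_const, probReal_univ,
    one_smul] using h

lemma linearMap_trace_secondMoment (A B : Matrix n n ℂ) :
    LinearMap.trace ℂ _ (secondMoment μ A B) = (A * B).trace := by
  have h := linearMap_trace_comp_secondMoment μ LinearMap.id A B
  simpa only [LinearMap.id_comp, LinearMap.id_apply, ← map_mul, trace_conjStarAlgAut,
    integral_const, probReal_univ, one_smul] using h

theorem integral_trace_conj_mul_map_conj [Nontrivial n] [μ.IsMulLeftInvariant]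
    (Φ : Matrix n n ℂ →ₗ[ℂ] Matrix n n ℂ) (A B : Matrix n n ℂ) :
    ∫ U, (conjStarAlgAut ℂ _ U A * Φ (conjStarAlgAut ℂ _ U B)).trace ∂μ =
      ((Fintype.card n * (A * B).trace - A.trace * B.trace) * LinearMap.trace ℂ _ Φ +
        (Fintype.card n * (A.trace * B.trace) - (A * B).trace) * (Φ 1).trace) /
      (Fintype.card n * ((Fintype.card n : ℂ) ^ 2 - 1)) := by
  obtain ⟨c, b, hcb⟩ := (isUnitarilyCovariant_secondMoment μ A B).exists_eq_smul_add_trace_smul_one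
  have trace_comp (Ψ : Matrix n n ℂ →ₗ[ℂ] Matrix n n ℂ) :=
    linearMap_trace_comp_of_eq_smul_add_trace_smul_one Ψ hcb
  have trace_one_eq : Fintype.card n * c + (Fintype.card n : ℂ) ^ 2 * b = A.trace * B.trace := by
    rw [← trace_secondMoment_one μ A B, hcb, trace_add, trace_smul, trace_smul, trace_one,
      smul_eq_mul, smul_eq_mul]
    ring
  have trace_eq : (Fintype.card n : ℂ) ^ 2 * c + Fintype.card n * b = (A * B).trace := by
    rw [← linearMap_trace_secondMoment μ A B, ← LinearMap.id_comp (secondMoment μ A B), trace_comp,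
      LinearMap.trace_id, Module.finrank_matrix, LinearMap.id_apply, trace_one, Module.finrank_self]
    push_cast
    ring
  have hd : (Fintype.card n : ℂ) ^ 2 - 1 ≠ 0 := natCast_sq_sub_one_ne_zero Fintype.one_lt_card
  rw [← linearMap_trace_comp_secondMoment, trace_comp, ← trace_one_eq, ← trace_eq]
  field_simp
  ring

end ProbabilityMeasure

end SecondMoment

section KrausMap

variable {n ι : Type*} [Fintype n] [DecidableEq n] [Fintype ι]

/-- The linear endomorphism `X ↦ ∑ i, K i * X * (K i)ᴴ` with Kraus operators `K`; it is a channel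
when `∑ i, (K i)ᴴ * K i = 1`. -/
noncomputable def krausMap (K : ι → Matrix n n ℂ) : Matrix n n ℂ →ₗ[ℂ] Matrix n n ℂ :=
  ∑ i, LinearMap.mulLeftRight ℂ (K i, (K i)ᴴ)

lemma krausMap_apply (K : ι → Matrix n n ℂ) (X : Matrix n n ℂ) :
    krausMap K X = ∑ i, K i * X * (K i)ᴴ := by
  simp [krausMap, LinearMap.sum_apply]

lemma trace_krausMap_one {K : ι → Matrix n n ℂ} (hK : ∑ i, (K i)ᴴ * K i = 1) :
    (krausMap K 1).trace = Fintype.card n := by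
  simp only [krausMap_apply, mul_one, trace_sum, trace_mul_comm (K _)]
  rw [← trace_sum, hK, trace_one]

lemma linearMap_trace_krausMap (K : ι → Matrix n n ℂ) :
    LinearMap.trace ℂ _ (krausMap K) = ((∑ i, ‖(K i).trace‖ ^ 2 : ℝ) : ℂ) := by
  simp [krausMap, linearMap_trace_mulLeftRight, trace_conjTranspose, Complex.mul_conj']

theorem haar_average_fidelity_general [Nontrivial n] (μ : Measure (unitaryGroup n ℂ))
    [IsProbabilityMeasure μ] [μ.IsMulLeftInvariant] (K : ι → Matrix n n ℂ)
    (hK : ∑ i, (K i)ᴴ * K i = 1) (q : ℝ)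
    (hq : q = ((∑ i, ‖(K i).trace‖ ^ 2) - 1) / ((Fintype.card n : ℝ) ^ 2 - 1))
    (A B : Matrix n n ℂ) :
    ∫ U, (A * ((U : Matrix n n ℂ)ᴴ * (∑ i, K i * ((U : Matrix n n ℂ) * B * (U : Matrix n n ℂ)ᴴ) *
        (K i)ᴴ) * (U : Matrix n n ℂ))).trace ∂μ =
      q * (A * B).trace + (1 - q) / Fintype.card n * (A.trace * B.trace) := by
  have integrand_eq (U : unitaryGroup n ℂ) :
      (A * ((U : Matrix n n ℂ)ᴴ * (∑ i, K i * ((U : Matrix n n ℂ) * B * (U : Matrix n n ℂ)ᴴ) *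
        (K i)ᴴ) * (U : Matrix n n ℂ))).trace =
      (conjStarAlgAut ℂ _ U A * krausMap K (conjStarAlgAut ℂ _ U B)).trace := by
    rw [krausMap_apply, conjStarAlgAut_apply, conjStarAlgAut_apply, star_eq_conjTranspose,
      ← Matrix.mul_assoc, trace_mul_comm]
    simp only [Matrix.mul_assoc]
  simp_rw [integrand_eq]
  rw [integral_trace_conj_mul_map_conj, linearMap_trace_krausMap, trace_krausMap_one hK, hq]
  have hd : (Fintype.card n : ℂ) ^ 2 - 1 ≠ 0 := natCast_sq_sub_one_ne_zero Fintype.one_lt_card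
  push_cast
  field_simp
  ring

end KrausMap

/-- **Haar-average of the unnormalized recovery fidelity `F′` (PQAS authentication).**
For a Kraus channel `Γ` with `q = (Σᵢ |tr Kᵢ|² − 1)/(d² − 1)` and any density matrix `ρ`:
`∫ tr(ρ · Uᴴ Γ(U ρ Uᴴ) U) dμ(U) = q·tr(ρ²) + (1 − q)/d`. -/
theorem haar_average_fidelity (d : ℕ) (hd : 2 ≤ d)
    (μ : Measure (Matrix.unitaryGroup (Fin d) ℂ))
    [μ.IsHaarMeasure] [IsProbabilityMeasure μ]
    (r : ℕ) (K : Fin r → Matrix (Fin d) (Fin d) ℂ)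
    (hK : ∑ i, (K i)ᴴ * K i = 1)
    (q : ℝ) (hq : q = ((∑ i, ‖(K i).trace‖ ^ 2) - 1) / ((d : ℝ) ^ 2 - 1))
    (ρ : Matrix (Fin d) (Fin d) ℂ) (hρ : ρ.PosSemidef) (hρtr : ρ.trace = 1) :
    (∫ U, (ρ * ((U : Matrix (Fin d) (Fin d) ℂ)ᴴ *
        (∑ i, K i * ((U : Matrix (Fin d) (Fin d) ℂ) * ρ *
          (U : Matrix (Fin d) (Fin d) ℂ)ᴴ) * (K i)ᴴ) *
        (U : Matrix (Fin d) (Fin d) ℂ))).trace ∂μ)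
      = (q : ℂ) * (ρ * ρ).trace + (((1 - q) / (d : ℝ) : ℝ) : ℂ) := by
  have : Nontrivial (Fin d) := Fin.nontrivial_iff_two_le.mpr hd
  simpa [hρtr] using haar_average_fidelity_general μ K hK q (by simpa using hq) ρ ρ
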